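/- Let X be a positive random variable with E[X] = 1, E[X log X] < ∞ and E[X log X] > log 2. Then there exists a unique α ∈ (0,1) such that E[(X^α / E[X^α]) · log(X^α / E[X^α])] = log 2. -/

import Mathlib

open MeasureTheory Real

/-!
Put `Y = log X`, so that `X ^ α / E[X ^ α]` is the density of the exponential tilt of `P` by `α Y`,
and let `K` be the cumulant-generating function of `Y`. On `(0, 1)` the entropy of the tilt is
`H(α) = α K'(α) - K(α)`, whose derivative `α K''(α)` is `α` times the variance of `Y` under the
tilt. It is positive unless `Y` is almost surely constant, in which case `H` is constant.
The exponents `0` and `1` may lie on the boundary of the domain of `K`, where `K'` need not make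
sense; there, continuity of `H` comes from dominating `α Y exp(α Y)` by `1 + |Y exp Y|`.
The intermediate value theorem finishes the proof.
-/

open ProbabilityTheory Set Filter Topology

lemma exp_le_one_add_abs_mul_exp (y : ℝ) : exp y ≤ 1 + |y * exp y| := by
  have h : (1 - y) * exp y ≤ exp (-y) * exp y :=
    mul_le_mul_of_nonneg_right (one_sub_le_exp_neg y) (exp_pos y).le
  rw [← exp_add, neg_add_cancel, exp_zero] at h
  linarith [le_abs_self (y * exp y)]

lemma abs_mul_exp_le_one {u : ℝ} (hu : u ≤ 0) : |u * exp u| ≤ 1 := by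
  simpa [mul_comm] using (abs_log_mul_self_lt (exp u) (exp_pos u) (exp_le_one_iff.2 hu)).le

lemma abs_mul_mul_exp_mul_le {t : ℝ} (ht : t ∈ Icc 0 1) (y : ℝ) :
    |t * y * exp (t * y)| ≤ 1 + |y * exp y| := by
  rcases le_total y 0 with hy | hy
  · linarith [abs_mul_exp_le_one (mul_nonpos_of_nonneg_of_nonpos ht.1 hy), abs_nonneg (y * exp y)]
  · have hty : t * y ≤ y := mul_le_of_le_one_left hy ht.2
    have hty' : 0 ≤ t * y := mul_nonneg ht.1 hy
    rw [abs_of_nonneg (by positivity), abs_of_nonneg (by positivity)]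
    have : t * y * exp (t * y) ≤ y * exp y := by gcongr
    linarith

lemma exp_mul_le_exp_mul_add_exp_mul {a b t : ℝ} (ht : t ∈ Icc a b) (y : ℝ) :
    exp (t * y) ≤ exp (a * y) + exp (b * y) := by
  rcases le_total y 0 with hy | hy
  · have : exp (t * y) ≤ exp (a * y) := exp_le_exp.2 (mul_le_mul_of_nonpos_right ht.1 hy)
    linarith [exp_pos (b * y)]
  · have : exp (t * y) ≤ exp (b * y) := exp_le_exp.2 (mul_le_mul_of_nonneg_right ht.2 hy)
    linarith [exp_pos (a * y)]

/-- The relative entropy with respect to `μ` of the exponential tilt `μ.tilted (t * Y ·)`, written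
as the integral of `f log f` for its density `f = exp (t Y) / E[exp (t Y)]`. -/
noncomputable def tiltedEntropy {Ω : Type*} [MeasurableSpace Ω] (Y : Ω → ℝ) (μ : Measure Ω)
    (t : ℝ) : ℝ :=
  ∫ ω, exp (t * Y ω) / mgf Y μ t * log (exp (t * Y ω) / mgf Y μ t) ∂μ

section

variable {Ω : Type*} [MeasurableSpace Ω] {μ : Measure Ω} {Y : Ω → ℝ} {t : ℝ}

lemma continuousOn_mgf_Icc {a b : ℝ} (hY : AEMeasurable Y μ)
    (ha : a ∈ integrableExpSet Y μ) (hb : b ∈ integrableExpSet Y μ) :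
    ContinuousOn (mgf Y μ) (Icc a b) := by
  refine continuousOn_of_dominated (bound := fun ω ↦ exp (a * Y ω) + exp (b * Y ω))
    (fun t _ ↦ by fun_prop) (fun t ht ↦ ae_of_all _ fun ω ↦ ?_) (ha.add hb)
    (ae_of_all _ fun ω ↦ by fun_prop)
  rw [norm_of_nonneg (exp_pos _).le]
  exact exp_mul_le_exp_mul_add_exp_mul ht (Y ω)

lemma variance_tilted_mul_pos (ht : t ∈ interior (integrableExpSet Y μ))
    (hconst : ¬ ∃ c, ∀ᵐ ω ∂μ, Y ω = c) : 0 < Var[Y; μ.tilted (t * Y ·)] := by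
  refine (variance_nonneg _ _).lt_of_ne' fun hvar ↦ hconst ?_
  have hexp : Integrable (fun ω ↦ exp (t * Y ω)) μ :=
    integrable_of_mem_integrableExpSet (interior_subset ht)
  have hae := ae_eq_integral_of_variance_eq_zero (memLp_tilted_mul ht 2) hvar
  exact ⟨_, (absolutelyContinuous_tilted hexp).ae_le hae⟩

lemma tiltedEntropy_eq_div_mgf_sub_cgf [NeZero μ] (hexp : t ∈ integrableExpSet Y μ)
    (hmul : Integrable (fun ω ↦ t * Y ω * exp (t * Y ω)) μ) :
    tiltedEntropy Y μ t = (∫ ω, t * Y ω * exp (t * Y ω) ∂μ) / mgf Y μ t - cgf Y μ t := by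
  have hpos : 0 < mgf Y μ t := mgf_pos_iff.2 hexp
  have hintegrand (ω : Ω) : exp (t * Y ω) / mgf Y μ t * log (exp (t * Y ω) / mgf Y μ t) =
      t * Y ω * exp (t * Y ω) / mgf Y μ t - cgf Y μ t / mgf Y μ t * exp (t * Y ω) := by
    rw [log_div (exp_pos _).ne' hpos.ne', log_exp, cgf]
    ring
  calc tiltedEntropy Y μ t
      = (∫ ω, t * Y ω * exp (t * Y ω) ∂μ) / mgf Y μ t - cgf Y μ t / mgf Y μ t * mgf Y μ t := by
        simp_rw [tiltedEntropy, hintegrand]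
        rw [integral_sub (hmul.div_const _) (hexp.const_mul _), integral_div, integral_const_mul]
        rfl
    _ = _ := by rw [div_mul_cancel₀ _ hpos.ne']

lemma tiltedEntropy_eq_mul_deriv_cgf_sub_cgf [NeZero μ]
    (ht : t ∈ interior (integrableExpSet Y μ)) :
    tiltedEntropy Y μ t = t * deriv (cgf Y μ) t - cgf Y μ t := by
  have hmul : Integrable (fun ω ↦ Y ω * exp (t * Y ω)) μ := by
    simpa using integrable_pow_mul_exp_of_mem_interior_integrableExpSet ht 1
  rw [tiltedEntropy_eq_div_mgf_sub_cgf (interior_subset ht)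
    (by simpa only [mul_assoc] using hmul.const_mul t), deriv_cgf ht]
  simp_rw [mul_assoc, integral_const_mul, mul_div_assoc]

lemma hasDerivAt_tiltedEntropy [NeZero μ] (ht : t ∈ interior (integrableExpSet Y μ)) :
    HasDerivAt (tiltedEntropy Y μ) (t * Var[Y; μ.tilted (t * Y ·)]) t := by
  have hcgf : HasDerivAt (cgf Y μ) (deriv (cgf Y μ) t) t :=
    (analyticAt_cgf ht).differentiableAt.hasDerivAt
  have hderiv : HasDerivAt (deriv (cgf Y μ)) (Var[Y; μ.tilted (t * Y ·)]) t := by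
    rw [variance_tilted_mul ht, iteratedDeriv_succ, iteratedDeriv_one]
    exact (analyticAt_cgf ht).deriv.differentiableAt.hasDerivAt
  have hlegendre : tiltedEntropy Y μ =ᶠ[𝓝 t] fun s ↦ s * deriv (cgf Y μ) s - cgf Y μ s := by
    filter_upwards [isOpen_interior.mem_nhds ht] with s hs
      using tiltedEntropy_eq_mul_deriv_cgf_sub_cgf hs
  refine HasDerivAt.congr_of_eventuallyEq ?_ hlegendre
  convert! ((hasDerivAt_id t).mul hderiv).sub hcgf using 1
  simp

lemma tiltedEntropy_zero (Y : Ω → ℝ) (μ : Measure Ω) [IsFiniteMeasure μ] :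
    tiltedEntropy Y μ 0 = -log (μ.real univ) := by
  rcases eq_zero_or_neZero μ with rfl | _
  · simp [tiltedEntropy]
  · rw [tiltedEntropy_eq_div_mgf_sub_cgf (by simp [integrableExpSet]) (by simp), cgf_zero']
    simp

lemma tiltedEntropy_eq_of_ae_eq_const {c : ℝ} (hc : ∀ᵐ ω ∂μ, Y ω = c) (s t : ℝ) :
    tiltedEntropy Y μ s = tiltedEntropy Y μ t := by
  refine integral_congr_ae (hc.mono fun ω hω ↦ ?_)
  have hdensity (r : ℝ) : exp (r * Y ω) / mgf Y μ r = (μ.real univ)⁻¹ := by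
    rw [mgf_congr hc, mgf_const', hω, div_mul_cancel_right₀ (exp_pos _).ne']
  simp only [hdensity]

lemma tiltedEntropy_log {X : Ω → ℝ} (hX : ∀ᵐ ω ∂μ, 0 < X ω) (α : ℝ) :
    tiltedEntropy (fun ω ↦ log (X ω)) μ α =
      ∫ ω, X ω ^ α / (∫ ω', X ω' ^ α ∂μ) * log (X ω ^ α / (∫ ω', X ω' ^ α ∂μ)) ∂μ := by
  have hexp : ∀ᵐ ω ∂μ, exp (α * log (X ω)) = X ω ^ α := by
    filter_upwards [hX] with ω hω
    rw [rpow_def_of_pos hω, mul_comm]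
  have hmgf : mgf (fun ω ↦ log (X ω)) μ α = ∫ ω, X ω ^ α ∂μ := integral_congr_ae hexp
  refine integral_congr_ae (hexp.mono fun ω hω ↦ ?_)
  simp only [hω, hmgf]

end

section

variable {Ω : Type*} [MeasurableSpace Ω] {μ : Measure Ω} [IsFiniteMeasure μ] {Y : Ω → ℝ}

lemma Icc_zero_one_subset_integrableExpSet (hY : AEMeasurable Y μ)
    (hint : Integrable (fun ω ↦ Y ω * exp (Y ω)) μ) : Icc 0 1 ⊆ integrableExpSet Y μ := by
  have hone : Integrable (fun ω ↦ exp (1 * Y ω)) μ := by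
    refine ((integrable_const 1).add hint.abs).mono' (by fun_prop) (ae_of_all _ fun ω ↦ ?_)
    simpa using exp_le_one_add_abs_mul_exp (Y ω)
  exact fun t ht ↦ integrable_exp_mul_of_nonneg_of_le hone ht.1 ht.2

lemma integrable_mul_mul_exp_mul (hY : AEMeasurable Y μ)
    (hint : Integrable (fun ω ↦ Y ω * exp (Y ω)) μ) {t : ℝ} (ht : t ∈ Icc 0 1) :
    Integrable (fun ω ↦ t * Y ω * exp (t * Y ω)) μ :=
  ((integrable_const 1).add hint.abs).mono' (by fun_prop)
    (ae_of_all _ fun ω ↦ abs_mul_mul_exp_mul_le ht (Y ω))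

lemma continuousOn_integral_mul_mul_exp_mul (hY : AEMeasurable Y μ)
    (hint : Integrable (fun ω ↦ Y ω * exp (Y ω)) μ) :
    ContinuousOn (fun t ↦ ∫ ω, t * Y ω * exp (t * Y ω) ∂μ) (Icc 0 1) :=
  continuousOn_of_dominated (bound := fun ω ↦ 1 + |Y ω * exp (Y ω)|)
    (fun _ _ ↦ by fun_prop)
    (fun _ ht ↦ ae_of_all _ fun ω ↦ abs_mul_mul_exp_mul_le ht (Y ω))
    ((integrable_const 1).add hint.abs) (ae_of_all _ fun _ ↦ by fun_prop)

lemma continuousOn_tiltedEntropy [NeZero μ] (hY : AEMeasurable Y μ)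
    (hint : Integrable (fun ω ↦ Y ω * exp (Y ω)) μ) :
    ContinuousOn (tiltedEntropy Y μ) (Icc 0 1) := by
  have hsub := Icc_zero_one_subset_integrableExpSet hY hint
  have hmgf : ContinuousOn (mgf Y μ) (Icc 0 1) :=
    continuousOn_mgf_Icc hY (hsub (by simp)) (hsub (by simp))
  have hmgf_ne : ∀ t ∈ Icc (0 : ℝ) 1, mgf Y μ t ≠ 0 :=
    fun t ht ↦ (mgf_pos_iff.2 (hsub ht)).ne'
  exact (((continuousOn_integral_mul_mul_exp_mul hY hint).div hmgf hmgf_ne).sub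
    (hmgf.log hmgf_ne)).congr fun t ht ↦
      tiltedEntropy_eq_div_mgf_sub_cgf (hsub ht) (integrable_mul_mul_exp_mul hY hint ht)

lemma strictMonoOn_tiltedEntropy [NeZero μ] (hY : AEMeasurable Y μ)
    (hint : Integrable (fun ω ↦ Y ω * exp (Y ω)) μ) (hconst : ¬ ∃ c, ∀ᵐ ω ∂μ, Y ω = c) :
    StrictMonoOn (tiltedEntropy Y μ) (Icc 0 1) := by
  refine strictMonoOn_of_deriv_pos (convex_Icc 0 1) (continuousOn_tiltedEntropy hY hint)
    fun t ht ↦ ?_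
  have ht' : t ∈ interior (integrableExpSet Y μ) :=
    interior_mono (Icc_zero_one_subset_integrableExpSet hY hint) ht
  rw [(hasDerivAt_tiltedEntropy ht').deriv]
  rw [interior_Icc] at ht
  exact mul_pos ht.1 (variance_tilted_mul_pos ht' hconst)

lemma existsUnique_tiltedEntropy_eq (hY : AEMeasurable Y μ)
    (hint : Integrable (fun ω ↦ Y ω * exp (Y ω)) μ) {c : ℝ}
    (hc : c ∈ Ioo (tiltedEntropy Y μ 0) (tiltedEntropy Y μ 1)) :
    ∃! t, t ∈ Ioo 0 1 ∧ tiltedEntropy Y μ t = c := by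
  have hconst : ¬ ∃ y, ∀ᵐ ω ∂μ, Y ω = y := fun ⟨_, hy⟩ ↦
    (hc.1.trans hc.2).ne (tiltedEntropy_eq_of_ae_eq_const hy 0 1)
  have : NeZero μ := ⟨fun hμ ↦ hconst ⟨0, by simp [hμ]⟩⟩
  obtain ⟨t, ht, rfl⟩ :=
    intermediate_value_Ioo zero_le_one (continuousOn_tiltedEntropy hY hint) hc
  refine ⟨t, ⟨ht, rfl⟩, fun s ⟨hs, hst⟩ ↦ ?_⟩
  exact (strictMonoOn_tiltedEntropy hY hint hconst).injOn (Ioo_subset_Icc_self hs)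
    (Ioo_subset_Icc_self ht) hst

end

theorem exists_unique_critical_exponent_general
    {Ω : Type*} [MeasurableSpace Ω] {μ : Measure Ω} [IsFiniteMeasure μ] {X : Ω → ℝ}
    (hXmeas : AEMeasurable X μ) (hXpos : ∀ᵐ ω ∂μ, 0 < X ω)
    (hXlogint : Integrable (fun ω ↦ X ω * log (X ω)) μ) {c : ℝ}
    (hc_lower : -log (μ.real univ) < c)
    (hc_upper : c < ∫ ω, X ω / (∫ ω', X ω' ∂μ) * log (X ω / ∫ ω', X ω' ∂μ) ∂μ) :
    ∃! α : ℝ, α ∈ Ioo 0 1 ∧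
      ∫ ω, X ω ^ α / (∫ ω', X ω' ^ α ∂μ) * log (X ω ^ α / (∫ ω', X ω' ^ α ∂μ)) ∂μ = c := by
  have hint : Integrable (fun ω ↦ log (X ω) * exp (log (X ω))) μ := by
    refine hXlogint.congr ?_
    filter_upwards [hXpos] with ω hω
    rw [exp_log hω, mul_comm]
  simp_rw [← tiltedEntropy_log hXpos]
  refine existsUnique_tiltedEntropy_eq hXmeas.log hint ⟨?_, ?_⟩
  · rwa [tiltedEntropy_zero]
  · simpa only [tiltedEntropy_log hXpos, rpow_one] using hc_upper

/-- If `X` is a positive random variable with `E[X] = 1`,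
`E[X log X] < ∞` and `E[X log X] > log 2`, then there is a unique `α ∈ (0,1)` such that
`E[(X^α / E[X^α]) · log(X^α / E[X^α])] = log 2`. -/
theorem exists_unique_critical_exponent
    {Ω : Type*} [MeasurableSpace Ω] (P : Measure Ω) [IsProbabilityMeasure P]
    (X : Ω → ℝ) (hXmeas : Measurable X) (hXpos : ∀ ω, 0 < X ω)
    (hXmean : ∫ ω, X ω ∂P = 1)
    (hXlogint : Integrable (fun ω => X ω * Real.log (X ω)) P)
    (hstrong : Real.log 2 < ∫ ω, X ω * Real.log (X ω) ∂P) :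
    ∃! α : ℝ, α ∈ Set.Ioo (0 : ℝ) 1 ∧
      ∫ ω, (X ω ^ α / (∫ ω', X ω' ^ α ∂P)) *
          Real.log (X ω ^ α / (∫ ω', X ω' ^ α ∂P)) ∂P = Real.log 2 :=
  exists_unique_critical_exponent_general hXmeas.aemeasurable (ae_of_all _ hXpos) hXlogint
    (by simpa using log_pos one_lt_two) (by simpa only [hXmean, div_one] using hstrong)
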